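/- Let P_1, ..., P_{n+1} be a proper family of lattice polytopes in R^n such that int_Z(P_I) = ∅ for all nonempty proper subsets I ⊊ [n+1] and int_Z(P_{[n+1]}) ≠ ∅. Then the Minkowski sum P_{[n+1]} contains exactly one interior lattice point. -/

import Mathlib

open scoped Pointwise
open MeasureTheory Finset

def IsLatticePt {n : ℕ} (x : Fin n → ℝ) : Prop := ∀ i, ∃ z : ℤ, x i = (z : ℝ)

def IsLatticePolytope {n : ℕ} (P : Set (Fin n → ℝ)) : Prop :=
  ∃ V : Finset (Fin n → ℝ), V.Nonempty ∧ (∀ v ∈ V, IsLatticePt v) ∧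
    P = convexHull ℝ (V : Set (Fin n → ℝ))

noncomputable def adim {n : ℕ} (A : Set (Fin n → ℝ)) : ℕ :=
  Module.finrank ℝ (affineSpan ℝ A).direction

def relintLat {n : ℕ} (A : Set (Fin n → ℝ)) : Set (Fin n → ℝ) :=
  {x ∈ intrinsicInterior ℝ A | IsLatticePt x}

def intLat {n : ℕ} (A : Set (Fin n → ℝ)) : Set (Fin n → ℝ) :=
  {x ∈ interior A | IsLatticePt x}

noncomputable def mixedVol {n m : ℕ} (P : Fin m → Set (Fin n → ℝ)) : ℝ :=
  ∑ I : Finset (Fin m), (-1 : ℝ) ^ (m - I.card) * (volume (∑ i ∈ I, P i)).toReal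

/-!
For more than `n` lattice polytopes in `ℝⁿ`, the sum over all index sets `I` of
`(-1) ^ (#I + dim P_I) * |int_ℤ P_I|` vanishes. In an irreducible family only `I = ∅`, which
contributes `1`, and the full index set survive in it.

To obtain this identity, lift each `P_i` to `ℝⁿ × ℝ` by a generic linear height. Each `u : ℝⁿ`
selects an upper face of the lift of every `P_I`, and this face projects to a cell of `P_I`. The
heights are generic enough that for every `u` some `P_i` has a single lattice point as its cell;
adding this point is a translation from the cell of `P_I` to the cell of `P_{I ∪ {i}}`, so the
alternating sum of the numbers of lattice points in the cells vanishes. Now integrate over `u` with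
respect to the compactly supported Euler characteristic: the `u` whose cell contains a fixed
`x ∈ P_I` form a polyhedron, with Euler characteristic `(-1) ^ (n - dim P_I)` if `x` is in the
relative interior of `P_I` and `0` otherwise.
-/

/-- The Iverson bracket, valued in `ℤ`; linear relations between indicator functions of sets are
written with it. -/
noncomputable def iverson (p : Prop) : ℤ :=
  open Classical in if p then 1 else 0

section Iverson

lemma iverson_true {p : Prop} (h : p) : iverson p = 1 := by simp [iverson, h]

lemma iverson_false {p : Prop} (h : ¬ p) : iverson p = 0 := by simp [iverson, h]

lemma iverson_exists_eq_sum {α : Type*} {p : α → Prop} {s : Finset α} (hs : ∀ a, p a → a ∈ s)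
    (hp : ∀ a b, p a → p b → a = b) : iverson (∃ a, p a) = ∑ a ∈ s, iverson (p a) := by
  by_cases h : ∃ a, p a
  · obtain ⟨a, ha⟩ := h
    rw [Finset.sum_eq_single_of_mem a (hs a ha) fun b _ hb ↦
      iverson_false fun hpb ↦ hb (hp b a hpb ha), iverson_true ⟨a, ha⟩, iverson_true ha]
  · rw [iverson_false h, Finset.sum_eq_zero fun a _ ↦ iverson_false fun ha ↦ h ⟨a, ha⟩]

lemma sum_iverson_mem {α : Type*} {s : Finset α} {B : Set α} (hB : B ⊆ s) :
    ∑ x ∈ s, iverson (x ∈ B) = B.ncard := by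
  classical
  simp only [iverson, Finset.sum_boole]
  rw [← Set.ncard_coe_finset, Finset.coe_filter]
  exact congrArg _ (congrArg _ (Set.sep_eq_of_subset hB))

end Iverson

section ClosedInterval

open Filter Topology

variable {J : Set ℝ}

lemma eventually_nhdsGT_iverson_mem (hc : IsClosed J) (ho : J.OrdConnected) (t : ℝ) :
    ∀ᶠ s in 𝓝[>] t, iverson (s ∈ J) = iverson (t ∈ J) - iverson (IsGreatest J t) := by
  by_cases ht : t ∈ J
  · rw [iverson_true ht]
    by_cases hg : IsGreatest J t
    · filter_upwards [self_mem_nhdsWithin] with s hs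
      rw [iverson_true hg, iverson_false fun h ↦ (hg.2 h).not_gt hs, sub_self]
    · obtain ⟨r, hr, htr⟩ : ∃ r ∈ J, t < r := by
        by_contra! hcon
        exact hg ⟨ht, hcon⟩
      filter_upwards [Ioo_mem_nhdsGT htr] with s hs
      rw [iverson_false hg, iverson_true (ho.out ht hr ⟨hs.1.le, hs.2.le⟩), sub_zero]
  · filter_upwards [nhdsWithin_le_nhds (hc.isOpen_compl.mem_nhds ht)] with s hs
    rw [iverson_false ht, iverson_false fun h : IsGreatest J t ↦ ht h.1, iverson_false hs, sub_zero]

lemma eventually_atBot_iverson_mem (ho : J.OrdConnected) :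
    ∀ᶠ s in atBot, iverson (s ∈ J) = iverson (J.Nonempty ∧ ¬ BddBelow J) := by
  by_cases hb : BddBelow J
  · obtain ⟨b, hb'⟩ := hb
    filter_upwards [eventually_lt_atBot b] with s hs
    rw [iverson_false fun h ↦ (hb' h).not_gt hs, iverson_false fun h ↦ h.2 ⟨b, hb'⟩]
  · have hne : J.Nonempty := nonempty_of_not_bddBelow hb
    have ⟨r, hr⟩ := hne
    filter_upwards [eventually_le_atBot r] with s hs
    obtain ⟨q, hq, hqs⟩ := not_bddBelow_iff.1 hb s
    rw [iverson_true (ho.out hq hr ⟨hqs.le, hs⟩), iverson_true ⟨hne, hb⟩]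

/-- The compactly supported Euler characteristic of a closed interval `J`: it is `1` if `J` is
nonempty and bounded, `-1` if `J = ℝ`, and `0` if `J` is empty or a ray. The formula telescopes
the jumps of the indicator of `J`, so that it is additive by inspection. -/
noncomputable def intervalEulerChar (J : Set ℝ) : ℤ :=
  iverson (∃ t, IsGreatest J t) - iverson (J.Nonempty ∧ ¬ BddBelow J)

lemma sum_mul_intervalEulerChar_eq_zero {ι : Type*} {s : Finset ι} {c : ι → ℤ} {J : ι → Set ℝ}
    (hc : ∀ j, IsClosed (J j)) (ho : ∀ j, (J j).OrdConnected)
    (h : ∀ t, ∑ j ∈ s, c j * iverson (t ∈ J j) = 0) :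
    ∑ j ∈ s, c j * intervalEulerChar (J j) = 0 := by
  classical
  have hjump (t : ℝ) : ∑ j ∈ s, c j * iverson (IsGreatest (J j) t) = 0 := by
    obtain ⟨r, hr⟩ := ((Finset.eventually_all s).2 fun j _ ↦
      eventually_nhdsGT_iverson_mem (hc j) (ho j) t).exists
    have hright := h r
    rw [Finset.sum_congr rfl fun j hj ↦ by rw [hr j hj]] at hright
    simpa only [mul_sub, Finset.sum_sub_distrib, h t, zero_sub, neg_eq_zero] using hright
  have hbot : ∑ j ∈ s, c j * iverson ((J j).Nonempty ∧ ¬ BddBelow (J j)) = 0 := by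
    obtain ⟨r, hr⟩ := ((Finset.eventually_all s).2 fun j _ ↦
      eventually_atBot_iverson_mem (ho j)).exists
    rw [← h r]
    exact Finset.sum_congr rfl fun j hj ↦ by rw [hr j hj]
  have hmax : ∑ j ∈ s, c j * iverson (∃ t, IsGreatest (J j) t) = 0 := by
    calc ∑ j ∈ s, c j * iverson (∃ t, IsGreatest (J j) t)
        = ∑ j ∈ s, ∑ t ∈ s.image fun j ↦ sSup (J j), c j * iverson (IsGreatest (J j) t) := by
          refine Finset.sum_congr rfl fun j hj ↦ ?_
          rw [← Finset.mul_sum, iverson_exists_eq_sum (s := s.image fun j ↦ sSup (J j))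
            (fun t ht ↦ Finset.mem_image.2 ⟨j, hj, ht.csSup_eq⟩) fun _ _ ↦ IsGreatest.unique]
      _ = 0 := by rw [Finset.sum_comm, Finset.sum_eq_zero fun t _ ↦ hjump t]
  simp only [intervalEulerChar, mul_sub, Finset.sum_sub_distrib, hbot, hmax, sub_zero]

end ClosedInterval

section FourierMotzkin

open Matrix

variable {κ : Type*}

open Classical in
/-- The nonnegative matrix of Fourier–Motzkin elimination of a variable `t` that occurs in a system
of inequalities with the coefficients `α`: it keeps the inequalities without `t` and combines each
upper bound `p` for `t` with each lower bound `q`. All other pairs `(p, q)` give zero rows. -/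
noncomputable def elimMatrix (α : κ → ℝ) : Matrix (κ ⊕ κ × κ) κ ℝ :=
  Sum.elim (fun k ↦ if α k = 0 then Pi.single k 1 else 0)
    fun r ↦ if 0 < α r.1 ∧ α r.2 < 0 then Pi.single r.2 (α r.1) + Pi.single r.1 (-α r.2) else 0

lemma elimMatrix_nonneg (α : κ → ℝ) (i : κ ⊕ κ × κ) : 0 ≤ elimMatrix α i := by
  classical
  rcases i with k | r
  · change 0 ≤ ite _ _ _
    split_ifs
    exacts [Pi.single_nonneg.2 zero_le_one, le_rfl]
  · change 0 ≤ ite _ _ _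
    split_ifs with h
    exacts [add_nonneg (Pi.single_nonneg.2 h.1.le)
      (Pi.single_nonneg.2 (neg_nonneg.2 h.2.le)), le_rfl]

lemma smul_le_of_bounds {α c : κ → ℝ} {t : ℝ} (h0 : ∀ k, α k = 0 → 0 ≤ c k)
    (hu : ∀ k, 0 < α k → t ≤ c k / α k) (hl : ∀ k, α k < 0 → c k / α k ≤ t) : t • α ≤ c := by
  intro k
  rw [Pi.smul_apply, smul_eq_mul]
  rcases lt_trichotomy (α k) 0 with h | h | h
  · exact (div_le_iff_of_neg h).1 (hl k h)
  · simpa [h] using h0 k h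
  · exact (le_div_iff₀ h).1 (hu k h)

variable [Fintype κ]

lemma elimMatrix_mulVec (α c : κ → ℝ) : elimMatrix α *ᵥ c = open Classical in
    Sum.elim (fun k ↦ if α k = 0 then c k else 0)
      fun r ↦ if 0 < α r.1 ∧ α r.2 < 0 then α r.1 * c r.2 - α r.2 * c r.1 else 0 := by
  classical
  ext (k | r)
  · change elimMatrix α (Sum.inl k) ⬝ᵥ c = _
    by_cases h : α k = 0 <;> simp [elimMatrix, h]
  · change elimMatrix α (Sum.inr r) ⬝ᵥ c = _
    by_cases h : 0 < α r.1 ∧ α r.2 < 0 <;> simp [elimMatrix, h, add_dotProduct, sub_eq_add_neg]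

lemma elimMatrix_mulVec_self (α : κ → ℝ) : elimMatrix α *ᵥ α = 0 := by
  rw [elimMatrix_mulVec]
  ext (k | r)
  · simp
  · simp [mul_comm]

lemma zero_le_elimMatrix_mulVec_iff {α c : κ → ℝ} : 0 ≤ elimMatrix α *ᵥ c ↔
    (∀ k, α k = 0 → 0 ≤ c k) ∧ ∀ p q, 0 < α p → α q < 0 → α q * c p ≤ α p * c q := by
  classical
  simp only [elimMatrix_mulVec, Pi.le_def, Sum.forall, Prod.forall, Pi.zero_apply, Sum.elim_inl,
    Sum.elim_inr]
  refine and_congr (forall_congr' fun k ↦ ?_) (forall₂_congr fun p q ↦ ?_)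
  · split_ifs with h <;> simp [h]
  · split_ifs with h
    · simp [h]
    · simpa using fun hp hq ↦ absurd ⟨hp, hq⟩ h

lemma exists_smul_le_iff {α c : κ → ℝ} : (∃ t : ℝ, t • α ≤ c) ↔ 0 ≤ elimMatrix α *ᵥ c := by
  classical
  constructor
  · rintro ⟨t, ht⟩
    have hc : c = (c - t • α) + t • α := (sub_add_cancel c _).symm
    rw [hc, Matrix.mulVec_add, Matrix.mulVec_smul, elimMatrix_mulVec_self, smul_zero, add_zero]
    exact fun i ↦ dotProduct_nonneg_of_nonneg (elimMatrix_nonneg α i) (sub_nonneg.2 ht)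
  · intro h
    obtain ⟨h0, hpq⟩ := zero_le_elimMatrix_mulVec_iff.1 h
    by_cases hU : ∃ p, 0 < α p
    · obtain ⟨p, hp, hmin⟩ := Finset.exists_min_image {k | 0 < α k} (fun k ↦ c k / α k)
        (hU.imp fun p hp ↦ by simpa using hp)
      rw [Finset.mem_filter_univ] at hp
      refine ⟨c p / α p, smul_le_of_bounds h0 (fun k hk ↦ hmin k (by simpa using hk))
        fun q hq ↦ ?_⟩
      rw [div_le_iff_of_neg hq, div_mul_eq_mul_div, div_le_iff₀ hp]
      linarith [hpq p q hp hq]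
    · by_cases hL : ∃ q, α q < 0
      · obtain ⟨q, -, hmax⟩ := Finset.exists_max_image {k | α k < 0} (fun k ↦ c k / α k)
          (hL.imp fun q hq ↦ by simpa using hq)
        exact ⟨c q / α q, smul_le_of_bounds h0 (fun k hk ↦ (hU ⟨k, hk⟩).elim)
          fun k hk ↦ hmax k (by simpa using hk)⟩
      · exact ⟨0, smul_le_of_bounds h0 (fun k hk ↦ (hU ⟨k, hk⟩).elim)
          fun k hk ↦ (hL ⟨k, hk⟩).elim⟩

end FourierMotzkin

section Polyhedron

open Matrix

variable {κ : Type*} {n : ℕ}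

/-- The polyhedron cut out by the linear inequalities `A *ᵥ u ≤ b`. If it is nonempty, then its
recession cone is `polyhedron A 0`. -/
def polyhedron (A : Matrix κ (Fin n) ℝ) (b : κ → ℝ) : Set (Fin n → ℝ) :=
  {u | A *ᵥ u ≤ b}

/-- The columns of a matrix other than the first one. -/
def tailCols (A : Matrix κ (Fin (n + 1)) ℝ) : Matrix κ (Fin n) ℝ :=
  A.submatrix id Fin.succ

lemma mulVec_vecCons (A : Matrix κ (Fin (n + 1)) ℝ) (t : ℝ) (y : Fin n → ℝ) :
    A *ᵥ vecCons t y = t • A.col 0 + tailCols A *ᵥ y :=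
  mulVec_cons A t y

lemma vecCons_mem_polyhedron_iff {A : Matrix κ (Fin (n + 1)) ℝ} {b : κ → ℝ} {t : ℝ}
    {y : Fin n → ℝ} : vecCons t y ∈ polyhedron A b ↔ t • A.col 0 ≤ b - tailCols A *ᵥ y := by
  rw [polyhedron, Set.mem_ofPred_eq, mulVec_vecCons, le_sub_iff_add_le]

lemma vecCons_zero_mem_polyhedron_zero_iff {A : Matrix κ (Fin (n + 1)) ℝ} {t : ℝ} :
    vecCons t 0 ∈ polyhedron A 0 ↔ t • A.col 0 ≤ 0 := by
  rw [vecCons_mem_polyhedron_iff, mulVec_zero, sub_zero]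

variable [Fintype κ]

/-- The coefficient matrix of the system obtained from `A *ᵥ u ≤ b` by eliminating the first
variable; the right-hand side of that system is `elimMatrix (A.col 0) *ᵥ b`. -/
noncomputable def eliminate (A : Matrix κ (Fin (n + 1)) ℝ) : Matrix (κ ⊕ κ × κ) (Fin n) ℝ :=
  elimMatrix (A.col 0) * tailCols A

lemma mem_polyhedron_eliminate_iff {A : Matrix κ (Fin (n + 1)) ℝ} {b : κ → ℝ} {y : Fin n → ℝ} :
    y ∈ polyhedron (eliminate A) (elimMatrix (A.col 0) *ᵥ b) ↔
      ∃ t, vecCons t y ∈ polyhedron A b := by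
  simp only [vecCons_mem_polyhedron_iff, exists_smul_le_iff, mulVec_sub, sub_nonneg, mulVec_mulVec]
  rfl

lemma mem_polyhedron_eliminate_zero_iff {A : Matrix κ (Fin (n + 1)) ℝ} {y : Fin n → ℝ} :
    y ∈ polyhedron (eliminate A) 0 ↔ ∃ t, vecCons t y ∈ polyhedron A 0 := by
  rw [← mem_polyhedron_eliminate_iff, mulVec_zero]

lemma exists_farkas_certificate {A : Matrix κ (Fin n) ℝ} {b : κ → ℝ}
    (h : polyhedron A b = ∅) : ∃ c : κ → ℝ, 0 ≤ c ∧ c ᵥ* A = 0 ∧ c ⬝ᵥ b < 0 := by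
  classical
  induction n generalizing κ with
  | zero =>
    obtain ⟨k, hk⟩ : ∃ k, b k < 0 := by
      by_contra! hb
      have h0 : 0 ∈ polyhedron A b := by rwa [polyhedron, Set.mem_ofPred_eq, mulVec_zero]
      exact Set.notMem_empty _ (h ▸ h0)
    exact ⟨Pi.single k 1, Pi.single_nonneg.2 zero_le_one, Subsingleton.elim _ _, by simpa using hk⟩
  | succ n ih =>
    obtain ⟨c, hc, hcA, hcb⟩ := ih (A := eliminate A) (b := elimMatrix (A.col 0) *ᵥ b) <| by
      refine Set.eq_empty_iff_forall_notMem.2 fun y hy ↦ ?_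
      obtain ⟨t, ht⟩ := mem_polyhedron_eliminate_iff.1 hy
      exact Set.notMem_empty _ (h ▸ ht)
    refine ⟨c ᵥ* elimMatrix (A.col 0), fun k ↦ dotProduct_nonneg_of_nonneg hc fun i ↦
      elimMatrix_nonneg _ i k, ?_, by rwa [← dotProduct_mulVec]⟩
    ext i
    cases i using Fin.cases with
    | zero =>
      calc (c ᵥ* elimMatrix (A.col 0)) ⬝ᵥ A.col 0 = c ⬝ᵥ elimMatrix (A.col 0) *ᵥ A.col 0 :=
            (dotProduct_mulVec _ _ _).symm
        _ = 0 := by rw [elimMatrix_mulVec_self, dotProduct_zero]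
    | succ i =>
      calc (c ᵥ* elimMatrix (A.col 0) ᵥ* tailCols A) i = (c ᵥ* eliminate A) i := by
            rw [vecMul_vecMul, eliminate]
        _ = 0 := congrFun hcA i

end Polyhedron

section EulerCharacteristic

open Matrix

section Fiber

variable {κ : Type*}

/-- The value of `intervalEulerChar` on each nonempty set of the form `{t | t • α ≤ c}`; it does
not depend on `c`. -/
noncomputable def fiberSign (α : κ → ℝ) : ℤ :=
  iverson (∃ k, 0 < α k) - iverson (∀ k, 0 ≤ α k)

lemma smul_eq_zero_of_fiberSign_ne_zero {α : κ → ℝ} (hα : fiberSign α ≠ 0) {t : ℝ}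
    (ht : t • α ≤ 0) : t • α = 0 := by
  by_cases hpos : ∃ p, 0 < α p
  · obtain ⟨q, hq⟩ : ∃ q, α q < 0 := by
      by_contra! hnonneg
      exact hα (by rw [fiberSign, iverson_true hpos, iverson_true hnonneg, sub_self])
    obtain ⟨p, hp⟩ := hpos
    have htp : t ≤ 0 := nonpos_of_mul_nonpos_left (ht p) hp
    have htq : 0 ≤ t := nonneg_of_mul_nonpos_left (ht q) hq
    rw [le_antisymm htp htq, zero_smul]
  · have hnonneg : ∀ k, 0 ≤ α k := by
      by_contra hnot
      exact hα (by rw [fiberSign, iverson_false hpos, iverson_false hnot, sub_self])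
    push Not at hpos
    rw [show α = 0 from le_antisymm hpos hnonneg, smul_zero]

lemma fiberSign_eq_one {α : κ → ℝ} (h : ∀ t : ℝ, t • α ≤ 0 → t = 0) : fiberSign α = 1 := by
  have hpos : ∃ k, 0 < α k := by
    by_contra! hα
    exact one_ne_zero (h 1 (by rwa [one_smul]))
  have hneg : ¬ ∀ k, 0 ≤ α k := fun hα ↦
    one_ne_zero (neg_eq_zero.1 (h (-1) (by rwa [neg_one_smul, neg_nonpos])))
  rw [fiberSign, iverson_true hpos, iverson_false hneg, sub_zero]

lemma isClosed_setOf_smul_le (α c : κ → ℝ) : IsClosed {t : ℝ | t • α ≤ c} :=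
  isClosed_le (by fun_prop) continuous_const

lemma ordConnected_setOf_smul_le (α c : κ → ℝ) : {t : ℝ | t • α ≤ c}.OrdConnected := by
  refine ⟨fun r hr s hs t ht k ↦ ?_⟩
  rcases le_total 0 (α k) with h | h
  · exact (mul_le_mul_of_nonneg_right ht.2 h).trans (hs k)
  · exact (mul_le_mul_of_nonpos_right ht.1 h).trans (hr k)

lemma exists_isGreatest_setOf_smul_le_iff {α c : κ → ℝ} (hne : ∃ t : ℝ, t • α ≤ c) :
    (∃ t, IsGreatest {t : ℝ | t • α ≤ c} t) ↔ ∃ k, 0 < α k := by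
  constructor
  · rintro ⟨t, ht, hmax⟩
    by_contra! hα
    have : t + 1 ≤ t := hmax (((add_smul t 1 α).trans_le
      (add_le_of_nonpos_right ((one_smul ℝ α).trans_le hα))).trans ht)
    linarith
  · rintro ⟨k, hk⟩
    exact ⟨_, (isClosed_setOf_smul_le α c).isGreatest_csSup hne
      ⟨c k / α k, fun t ht ↦ (le_div_iff₀ hk).2 (ht k)⟩⟩

lemma not_bddBelow_setOf_smul_le_iff {α c : κ → ℝ} (hne : ∃ t : ℝ, t • α ≤ c) :
    ¬ BddBelow {t : ℝ | t • α ≤ c} ↔ ∀ k, 0 ≤ α k := by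
  constructor
  · intro hb k
    by_contra! hk
    exact hb ⟨c k / α k, fun t ht ↦ (div_le_iff_of_neg hk).2 (ht k)⟩
  · intro hα
    obtain ⟨t, ht⟩ := hne
    refine not_bddBelow_iff.2 fun r ↦ ⟨min t (r - 1), fun k ↦ ?_, by
      linarith [min_le_right t (r - 1)]⟩
    exact (mul_le_mul_of_nonneg_right (min_le_left _ _) (hα k)).trans (ht k)

lemma intervalEulerChar_setOf_smul_le (α c : κ → ℝ) : intervalEulerChar {t : ℝ | t • α ≤ c} =
    fiberSign α * iverson (∃ t : ℝ, t • α ≤ c) := by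
  by_cases hne : ∃ t : ℝ, t • α ≤ c
  · rw [intervalEulerChar, fiberSign, exists_isGreatest_setOf_smul_le_iff hne,
      and_iff_right (show Set.Nonempty {t : ℝ | t • α ≤ c} from hne),
      not_bddBelow_setOf_smul_le_iff hne, iverson_true hne, mul_one]
  · rw [intervalEulerChar, iverson_false fun ⟨t, ht⟩ ↦ hne ⟨t, ht.1⟩, iverson_false fun h ↦ hne h.1,
      iverson_false hne, sub_zero, mul_zero]

end Fiber

/-- The compactly supported Euler characteristic of `polyhedron A b`, computed by integrating out
the variables one at a time with `intervalEulerChar`. -/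
noncomputable def eulerChar : (n : ℕ) → {κ : Type} → [Fintype κ] →
    Matrix κ (Fin n) ℝ → (κ → ℝ) → ℤ
  | 0, _, _, A, b => iverson (0 ∈ polyhedron A b)
  | n + 1, _, _, A, b =>
    fiberSign (A.col 0) * eulerChar n (eliminate A) (elimMatrix (A.col 0) *ᵥ b)

lemma sum_mul_eulerChar_eq_zero {n : ℕ} {ι : Type*} {κ : ι → Type} [∀ j, Fintype (κ j)]
    {s : Finset ι} {c : ι → ℤ} {A : ∀ j, Matrix (κ j) (Fin n) ℝ} {b : ∀ j, κ j → ℝ}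
    (h : ∀ u, ∑ j ∈ s, c j * iverson (u ∈ polyhedron (A j) (b j)) = 0) :
    ∑ j ∈ s, c j * eulerChar n (A j) (b j) = 0 := by
  induction n generalizing κ c with
  | zero => exact h 0
  | succ n ih =>
    simp only [eulerChar, ← mul_assoc]
    refine ih fun y ↦ ?_
    calc ∑ j ∈ s, c j * fiberSign ((A j).col 0) *
          iverson (y ∈ polyhedron (eliminate (A j)) (elimMatrix ((A j).col 0) *ᵥ b j))
        = ∑ j ∈ s, c j *
            intervalEulerChar {t : ℝ | t • (A j).col 0 ≤ b j - tailCols (A j) *ᵥ y} := by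
          simp only [intervalEulerChar_setOf_smul_le, mem_polyhedron_eliminate_iff,
            vecCons_mem_polyhedron_iff, mul_assoc]
      _ = 0 := by
          refine sum_mul_intervalEulerChar_eq_zero (fun j ↦ isClosed_setOf_smul_le _ _)
            (fun j ↦ ordConnected_setOf_smul_le _ _) fun t ↦ ?_
          simpa only [vecCons_mem_polyhedron_iff, Set.mem_ofPred_eq] using h (vecCons t y)

variable {n : ℕ} {κ : Type} [Fintype κ]

lemma eulerChar_eq_zero {A : Matrix κ (Fin n) ℝ} (b : κ → ℝ) {d : Fin n → ℝ}
    (hd : d ∈ polyhedron A 0) (hd' : -d ∉ polyhedron A 0) : eulerChar n A b = 0 := by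
  induction n generalizing κ with
  | zero => exact absurd (Subsingleton.elim d (-d) ▸ hd) hd'
  | succ n ih =>
    rw [eulerChar, mul_eq_zero, or_iff_not_imp_left]
    intro hsign
    rw [← cons_head_tail d] at hd
    refine ih _ (mem_polyhedron_eliminate_zero_iff.2 ⟨vecHead d, hd⟩) fun hneg ↦ hd' ?_
    obtain ⟨t, ht⟩ := mem_polyhedron_eliminate_zero_iff.1 hneg
    have hline : (vecHead d + t) • A.col 0 = 0 := by
      refine smul_eq_zero_of_fiberSign_ne_zero hsign ?_
      rw [← vecCons_zero_mem_polyhedron_zero_iff]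
      have hsum := add_nonpos (show A *ᵥ _ ≤ 0 from hd) (show A *ᵥ _ ≤ 0 from ht)
      rwa [← mulVec_add, cons_add_cons, add_neg_cancel] at hsum
    have hdecomp : -d = vecCons t (-vecTail d) - vecCons (vecHead d + t) 0 := by
      nth_rw 1 [← cons_head_tail d]
      rw [cons_sub_cons, neg_cons]
      simp
    have hcone : A *ᵥ (vecCons t (-vecTail d) - vecCons (vecHead d + t) 0) ≤ 0 := by
      rwa [mulVec_sub, mulVec_vecCons _ _ 0, hline, mulVec_zero, add_zero, sub_zero]
    rwa [hdecomp]

/-- The linear map forgetting the first coordinate. -/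
def tailLinear (n : ℕ) : (Fin (n + 1) → ℝ) →ₗ[ℝ] (Fin n → ℝ) :=
  LinearMap.funLeft ℝ ℝ Fin.succ

lemma mem_ker_tailLinear_iff {u : Fin (n + 1) → ℝ} :
    u ∈ (tailLinear n).ker ↔ ∃ t, vecCons t 0 = u := by
  refine ⟨fun h ↦ ⟨vecHead u, ?_⟩, ?_⟩
  · rw [← show vecTail u = 0 from h, cons_head_tail]
  · rintro ⟨t, rfl⟩
    rfl

lemma finrank_ker_tailLinear (n : ℕ) : Module.finrank ℝ (tailLinear n).ker = 1 := by
  have h := (tailLinear n).finrank_range_add_finrank_ker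
  rw [LinearMap.range_eq_top.2 fun y ↦ ⟨vecCons 0 y, rfl⟩, finrank_top, Module.finrank_fin_fun,
    Module.finrank_fin_fun] at h
  omega

lemma finrank_map_add_finrank_ker_of_le {K V V' : Type*} [DivisionRing K] [AddCommGroup V]
    [Module K V] [FiniteDimensional K V] [AddCommGroup V'] [Module K V'] {f : V →ₗ[K] V'}
    {L : Submodule K V} (h : f.ker ≤ L) :
    Module.finrank K (L.map f) + Module.finrank K f.ker = Module.finrank K L := by
  rw [← (f.domRestrict L).finrank_range_add_finrank_ker, LinearMap.range_domRestrict,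
    LinearMap.ker_domRestrict, (Submodule.comapSubtypeEquivOfLe h).finrank_eq]

lemma finrank_map_of_disjoint_ker {K V V' : Type*} [DivisionRing K] [AddCommGroup V] [Module K V]
    [AddCommGroup V'] [Module K V'] {f : V →ₗ[K] V'} {L : Submodule K V} (h : Disjoint L f.ker) :
    Module.finrank K (L.map f) = Module.finrank K L := by
  rw [← LinearMap.range_domRestrict,
    LinearMap.finrank_range_of_inj (LinearMap.injective_domRestrict_iff.2 h)]

lemma coe_map_tailLinear_of_coe_eq_polyhedron {A : Matrix κ (Fin (n + 1)) ℝ}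
    {L : Submodule ℝ (Fin (n + 1) → ℝ)} (hL : (L : Set (Fin (n + 1) → ℝ)) = polyhedron A 0) :
    (L.map (tailLinear n) : Set (Fin n → ℝ)) = polyhedron (eliminate A) 0 := by
  ext y
  rw [mem_polyhedron_eliminate_zero_iff, ← hL, Submodule.map_coe]
  constructor
  · rintro ⟨u, hu, rfl⟩
    exact ⟨vecHead u, by rwa [show tailLinear n u = vecTail u from rfl, cons_head_tail]⟩
  · rintro ⟨t, ht⟩
    exact ⟨_, ht, rfl⟩

lemma eulerChar_eq_neg_one_pow_finrank {A : Matrix κ (Fin n) ℝ} {b : κ → ℝ}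
    {L : Submodule ℝ (Fin n → ℝ)} (hL : (L : Set (Fin n → ℝ)) = polyhedron A 0)
    (hne : (polyhedron A b).Nonempty) : eulerChar n A b = (-1) ^ Module.finrank ℝ L := by
  induction n generalizing κ with
  | zero =>
    obtain ⟨u, hu⟩ := hne
    rw [eulerChar, Module.finrank_zero_of_subsingleton, pow_zero,
      iverson_true (Subsingleton.elim u 0 ▸ hu)]
  | succ n ih =>
    have hne' : (polyhedron (eliminate A) (elimMatrix (A.col 0) *ᵥ b)).Nonempty := by
      obtain ⟨u, hu⟩ := hne
      exact ⟨vecTail u, mem_polyhedron_eliminate_iff.2 ⟨vecHead u, by rwa [cons_head_tail]⟩⟩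
    rw [eulerChar, ih (coe_map_tailLinear_of_coe_eq_polyhedron hL) hne']
    have hmem {t : ℝ} : vecCons t 0 ∈ L ↔ t • A.col 0 ≤ 0 := by
      rw [← SetLike.mem_coe, hL, vecCons_zero_mem_polyhedron_zero_iff]
    by_cases hα : A.col 0 = 0
    · have hker : (tailLinear n).ker ≤ L := by
        intro u hu
        obtain ⟨t, rfl⟩ := mem_ker_tailLinear_iff.1 hu
        rw [hmem, hα, smul_zero]
      rw [← finrank_map_add_finrank_ker_of_le hker, finrank_ker_tailLinear, pow_succ',
        hα, fiberSign]
      simp [iverson]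
    · have hline (t : ℝ) (ht : vecCons t 0 ∈ L) : t = 0 := by
        have ht' : vecCons (-t) 0 ∈ L := by simpa using L.neg_mem ht
        rw [hmem] at ht ht'
        rw [neg_smul, neg_nonpos] at ht'
        exact (smul_eq_zero.1 (le_antisymm ht ht')).resolve_right hα
      have hdisj : Disjoint L (tailLinear n).ker := by
        refine Submodule.disjoint_def.2 fun u hu hker ↦ ?_
        obtain ⟨t, rfl⟩ := mem_ker_tailLinear_iff.1 hker
        rw [hline t hu, cons_zero_zero]
      rw [finrank_map_of_disjoint_ker hdisj,
        fiberSign_eq_one fun t ht ↦ hline t (hmem.2 ht), one_mul]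

end EulerCharacteristic

section Support

open Filter Topology

variable {E : Type*}

lemma mem_dualAnnihilator_direction_affineSpan_iff {K : Type*} [Field K] [AddCommGroup E]
    [Module K E] {A : Set E} {x : E} (hx : x ∈ A) {f : Module.Dual K E} :
    f ∈ (affineSpan K A).direction.dualAnnihilator ↔ ∀ y ∈ A, f y = f x := by
  rw [direction_affineSpan, vectorSpan_eq_span_vsub_set_right K hx, ← SetLike.mem_coe,
    Submodule.coe_dualAnnihilator_span]
  simp [Set.subset_def, sub_eq_zero]

variable [AddCommGroup E] [Module ℝ E] [TopologicalSpace E] [IsTopologicalAddGroup E]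
  [ContinuousSMul ℝ E] {A : Set E} {x : E}

lemma exists_support_of_notMem_interior (hA : Convex ℝ A) (hne : (interior A).Nonempty)
    (hx : x ∉ interior A) :
    ∃ f : StrongDual ℝ E, (∀ y ∈ A, f y ≤ f x) ∧ ∃ y ∈ A, f y < f x := by
  obtain ⟨f, hf⟩ := geometric_hahn_banach_open_point hA.interior isOpen_interior hx
  have hclosure : closure (interior A) ⊆ {y | f y ≤ f x} :=
    closure_minimal (fun y hy ↦ (hf y hy).le) (isClosed_le f.continuous continuous_const)
  rw [hA.closure_interior_eq_closure_of_nonempty_interior hne] at hclosure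
  obtain ⟨y, hy⟩ := hne
  exact ⟨f, fun z hz ↦ hclosure (subset_closure hz), y, interior_subset hy, hf y hy⟩

lemma eq_of_forall_le_of_mem_intrinsicInterior (hx : x ∈ intrinsicInterior ℝ A)
    {f : Module.Dual ℝ E} (hf : ∀ y ∈ A, f y ≤ f x) {y : E} (hy : y ∈ A) : f y = f x := by
  obtain ⟨p, hp, rfl⟩ := mem_intrinsicInterior.1 hx
  let q : affineSpan ℝ A := ⟨y, subset_affineSpan _ _ hy⟩
  have : Nonempty (affineSpan ℝ A) := ⟨p⟩
  have hcont : Continuous (AffineMap.lineMap p q : ℝ → affineSpan ℝ A) :=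
    AffineMap.lineMap_continuous
  have hnear : ∀ᶠ t : ℝ in 𝓝[<] 0, (AffineMap.lineMap p q t : E) ∈ A := nhdsWithin_le_nhds <|
    (hcont.tendsto' 0 p (AffineMap.lineMap_apply_zero p q)).eventually
      (mem_interior_iff_mem_nhds.1 hp)
  obtain ⟨t, htA, ht⟩ := (hnear.and self_mem_nhdsWithin).exists
  have hcoe : (AffineMap.lineMap p q t : E) = t • (y - p) + p :=
    ((affineSpan ℝ A).subtype.apply_lineMap p q t).trans (AffineMap.lineMap_apply_module' _ _ _)
  have hle : t * (f y - f p) ≤ 0 := by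
    simpa [hcoe] using hf _ htA
  exact le_antisymm (hf y hy) (sub_nonneg.1 (nonneg_of_mul_nonpos_right hle ht))

lemma exists_support_of_notMem_intrinsicInterior {E : Type*} [NormedAddCommGroup E]
    [NormedSpace ℝ E] [FiniteDimensional ℝ E] {A : Set E} {x : E} (hA : Convex ℝ A) (hx : x ∈ A)
    (hx' : x ∉ intrinsicInterior ℝ A) :
    ∃ f : Module.Dual ℝ E, (∀ y ∈ A, f y ≤ f x) ∧ ∃ y ∈ A, f y < f x := by
  let p : affineSpan ℝ A := ⟨x, subset_affineSpan _ _ hx⟩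
  have : Nonempty (affineSpan ℝ A) := ⟨p⟩
  let φ := (AffineIsometryEquiv.vaddConst ℝ p).toHomeomorph
  let B : Set (affineSpan ℝ A).direction := φ ⁻¹' ((↑) ⁻¹' A)
  have hB : Convex ℝ B := hA.affine_preimage
    ((affineSpan ℝ A).subtype.comp (AffineEquiv.vaddConst ℝ p).toAffineMap)
  have hint : φ ⁻¹' interior ((↑) ⁻¹' A) = interior B := φ.preimage_interior _
  have h0 : 0 ∉ interior B := fun h ↦
    hx' (mem_intrinsicInterior.2 ⟨φ 0, by rwa [← hint] at h, by simp [φ, p]⟩)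
  have hne : (interior B).Nonempty := by
    obtain ⟨y, hy⟩ := Set.Nonempty.intrinsicInterior hA ⟨x, hx⟩
    obtain ⟨z, hz, -⟩ := mem_intrinsicInterior.1 hy
    exact ⟨φ.symm z, by rwa [← hint, Set.mem_preimage, φ.apply_symm_apply]⟩
  obtain ⟨f, hle, b, hb, hlt⟩ := exists_support_of_notMem_interior hB hne h0
  obtain ⟨g, hg⟩ := LinearMap.exists_extend (f : (affineSpan ℝ A).direction →ₗ[ℝ] ℝ)
  have hgf (d : (affineSpan ℝ A).direction) : g d = f d := LinearMap.congr_fun hg d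
  rw [map_zero] at hlt hle
  refine ⟨g, fun y hy ↦ ?_, b + x, hb, by rwa [map_add, hgf, add_lt_iff_neg_right]⟩
  have hd : y - x ∈ (affineSpan ℝ A).direction :=
    AffineSubspace.vsub_mem_direction (subset_affineSpan _ _ hy) p.2
  rw [← sub_nonpos, ← map_sub, show g (y - x) = f ⟨y - x, hd⟩ from hgf ⟨y - x, hd⟩]
  exact hle _ (show y - x + x ∈ A by rwa [sub_add_cancel])

variable {n : ℕ}

/-- The vectors orthogonal to the affine span of `A`; the normal cone of a convex set `A` at each
point of its relative interior. -/
def orthogonalDirections (A : Set (Fin n → ℝ)) : Submodule ℝ (Fin n → ℝ) :=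
  (affineSpan ℝ A).direction.dualAnnihilator.comap (dotProductEquiv ℝ (Fin n)).toLinearMap

lemma adim_add_finrank_orthogonalDirections (A : Set (Fin n → ℝ)) :
    adim A + Module.finrank ℝ (orthogonalDirections A) = n := by
  have hcomap : Module.finrank ℝ (orthogonalDirections A) =
      Module.finrank ℝ (affineSpan ℝ A).direction.dualAnnihilator := by
    rw [orthogonalDirections, Submodule.comap_equiv_eq_map_symm, LinearEquiv.finrank_map_eq]
  rw [hcomap, adim, Subspace.finrank_add_finrank_dualAnnihilator_eq, Module.finrank_fin_fun]

lemma mem_orthogonalDirections_iff {A : Set (Fin n → ℝ)} {x : Fin n → ℝ}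
    (hx : x ∈ intrinsicInterior ℝ A) {u : Fin n → ℝ} :
    u ∈ orthogonalDirections A ↔ ∀ y ∈ A, u ⬝ᵥ y ≤ u ⬝ᵥ x := by
  have hxA := intrinsicInterior_subset hx
  rw [orthogonalDirections, Submodule.mem_comap,
    mem_dualAnnihilator_direction_affineSpan_iff hxA]
  exact ⟨fun h y hy ↦ (h y hy).le,
    fun h y hy ↦ eq_of_forall_le_of_mem_intrinsicInterior hx h hy⟩

end Support

section ExposedFace

variable {E : Type*} [TopologicalSpace E] [AddCommGroup E] [Module ℝ E]

lemma toExposed_add (l : StrongDual ℝ E) (A B : Set E) :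
    l.toExposed (A + B) = l.toExposed A + l.toExposed B := by
  ext x
  constructor
  · rintro ⟨⟨a, ha, b, hb, rfl⟩, hmax⟩
    refine ⟨a, ⟨ha, fun a' ha' ↦ ?_⟩, b, ⟨hb, fun b' hb' ↦ ?_⟩, rfl⟩
    · simpa using hmax _ (Set.add_mem_add ha' hb)
    · simpa using hmax _ (Set.add_mem_add ha hb')
  · rintro ⟨a, ⟨ha, hamax⟩, b, ⟨hb, hbmax⟩, rfl⟩
    refine ⟨Set.add_mem_add ha hb, ?_⟩
    rintro _ ⟨a', ha', b', hb', rfl⟩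
    simpa using add_le_add (hamax a' ha') (hbmax b' hb')

lemma toExposed_zero (l : StrongDual ℝ E) : l.toExposed 0 = 0 :=
  Set.Subset.antisymm (Set.sep_subset _ _) fun _ hx ↦ ⟨hx, fun _ hy ↦ by rw [hx, hy]⟩

lemma toExposed_sum {ι : Type*} (l : StrongDual ℝ E) (s : Finset ι) (A : ι → Set E) :
    l.toExposed (∑ i ∈ s, A i) = ∑ i ∈ s, l.toExposed (A i) := by
  let φ : Set E →+ Set E :=
    { toFun := l.toExposed, map_zero' := toExposed_zero l, map_add' := toExposed_add l }
  exact map_sum φ A s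

lemma exists_toExposed_convexHull_eq_singleton [T2Space E] [IsTopologicalAddGroup E]
    [ContinuousSMul ℝ E] [LocallyConvexSpace ℝ E] {l : StrongDual ℝ E} {V : Finset E}
    (hV : V.Nonempty) (hl : Set.InjOn l V) : ∃ v ∈ V, l.toExposed (convexHull ℝ V) = {v} := by
  set F := l.toExposed (convexHull ℝ V)
  have hexp : IsExposed ℝ (convexHull ℝ V) F := ContinuousLinearMap.toExposed.isExposed
  have hcompact : IsCompact (convexHull ℝ (V : Set E)) := V.finite_toSet.isCompact_convexHull ℝ
  have hFcompact : IsCompact F := hexp.isCompact hcompact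
  have hFconvex : Convex ℝ F := hexp.convex (convex_convexHull ℝ _)
  obtain ⟨z, hz, hzmax⟩ := hcompact.exists_isMaxOn
    (convexHull_nonempty_iff.2 (Finset.coe_nonempty.2 hV)) l.continuous.continuousOn
  have hextV : F.extremePoints ℝ ⊆ V :=
    hexp.isExtreme.extremePoints_subset_extremePoints.trans extremePoints_convexHull_subset
  obtain ⟨v, hv⟩ := hFcompact.extremePoints_nonempty ⟨z, hz, hzmax⟩
  have hext : F.extremePoints ℝ = {v} := by
    refine Set.eq_singleton_iff_unique_mem.2 ⟨hv, fun w hw ↦ hl (hextV hw) (hextV hv) ?_⟩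
    exact le_antisymm (hv.1.2 w hw.1.1) (hw.1.2 v hv.1.1)
  refine ⟨v, hextV hv, ?_⟩
  rw [← closure_convexHull_extremePoints hFcompact hFconvex, hext, convexHull_singleton,
    closure_singleton]

end ExposedFace

section LiftedPolytope

open Matrix

variable {n : ℕ}

/-- The functional `(v, t) ↦ u ⬝ᵥ v + t`. -/
noncomputable def liftFunctional (u : Fin n → ℝ) : StrongDual ℝ ((Fin n → ℝ) × ℝ) :=
  LinearMap.toContinuousLinearMap ((dotProductEquiv ℝ (Fin n) u).coprod LinearMap.id)

lemma liftFunctional_apply (u : Fin n → ℝ) (q : (Fin n → ℝ) × ℝ) :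
    liftFunctional u q = u ⬝ᵥ q.1 + q.2 := rfl

/-- The projection to `ℝⁿ` of the face of `Q` on which `liftFunctional u` is maximal. For a polytope
`Q`, the sets `cell Q u` are the cells of the regular subdivision of `Prod.fst '' Q` induced by the
upper hull of `Q`. -/
def cell (Q : Set ((Fin n → ℝ) × ℝ)) (u : Fin n → ℝ) : Set (Fin n → ℝ) :=
  Prod.fst '' (liftFunctional u).toExposed Q

lemma cell_subset (Q : Set ((Fin n → ℝ) × ℝ)) (u : Fin n → ℝ) : cell Q u ⊆ Prod.fst '' Q :=
  Set.image_mono (Set.sep_subset _ _)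

lemma cell_sum {ι : Type*} (s : Finset ι) (Q : ι → Set ((Fin n → ℝ) × ℝ)) (u : Fin n → ℝ) :
    cell (∑ i ∈ s, Q i) u = ∑ i ∈ s, cell (Q i) u := by
  rw [cell, toExposed_sum]
  exact Set.image_finsetSum (AddMonoidHom.fst (Fin n → ℝ) ℝ) s _

/-- The height of the upper hull of `Q` above `x`; it has the junk value `0` if `Q` contains no
point above `x`. -/
noncomputable def roof (Q : Set ((Fin n → ℝ) × ℝ)) (x : Fin n → ℝ) : ℝ :=
  sSup {t | (x, t) ∈ Q}

lemma isGreatest_roof {Q : Set ((Fin n → ℝ) × ℝ)} (hQ : IsCompact Q) {x : Fin n → ℝ}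
    (hx : x ∈ Prod.fst '' Q) : IsGreatest {t | (x, t) ∈ Q} (roof Q x) := by
  obtain ⟨q, hq, rfl⟩ := hx
  have hsub : {t | (q.1, t) ∈ Q} ⊆ Prod.snd '' Q := fun t ht ↦ ⟨(q.1, t), ht, rfl⟩
  exact (hQ.isClosed.preimage (by fun_prop)).isGreatest_csSup ⟨q.2, hq⟩
    ((hQ.image continuous_snd).bddAbove.mono hsub)

lemma mem_cell_iff {Q : Set ((Fin n → ℝ) × ℝ)} (hQ : IsCompact Q) {x : Fin n → ℝ}
    (hx : x ∈ Prod.fst '' Q) {u : Fin n → ℝ} :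
    x ∈ cell Q u ↔ ∀ q ∈ Q, liftFunctional u q ≤ liftFunctional u (x, roof Q x) := by
  have hroof := isGreatest_roof hQ hx
  constructor
  · rintro ⟨⟨y, t⟩, ⟨hmem, hmax⟩, rfl⟩ q hq
    exact (hmax q hq).trans (add_le_add_right (hroof.2 hmem) _)
  · exact fun h ↦ ⟨(x, roof Q x), ⟨hroof.1, h⟩, rfl⟩

lemma forall_mem_convexHull_le_iff {E : Type*} [AddCommGroup E] [Module ℝ E] {S : Set E}
    (f : Module.Dual ℝ E) (c : ℝ) : (∀ y ∈ convexHull ℝ S, f y ≤ c) ↔ ∀ y ∈ S, f y ≤ c :=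
  (convex_halfSpace_le f.isLinear c).convexHull_subset_iff

variable (W : Finset ((Fin n → ℝ) × ℝ)) (x : Fin n → ℝ)

/-- The projection to `ℝⁿ` of the lifted polytope `convexHull ℝ W`. -/
def projectedHull : Set (Fin n → ℝ) := convexHull ℝ (Prod.fst '' (W : Set ((Fin n → ℝ) × ℝ)))

lemma image_fst_convexHull :
    Prod.fst '' convexHull ℝ (W : Set ((Fin n → ℝ) × ℝ)) = projectedHull W :=
  (LinearMap.fst ℝ (Fin n → ℝ) ℝ).image_convexHull _

/-- The coefficient matrix of the system of inequalities describing `{u | x ∈ cell Q u}`, where `Q`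
is the convex hull of `W`. -/
def dualCellMatrix : Matrix W (Fin n) ℝ := Matrix.of fun w ↦ w.1.1 - x

/-- The right-hand side of the system of inequalities describing `{u | x ∈ cell Q u}`, where `Q` is
the convex hull of `W`. -/
noncomputable def dualCellBound : W → ℝ := fun w ↦ roof (convexHull ℝ W) x - w.1.2

variable {W x}

lemma mem_polyhedron_dualCell_iff (hx : x ∈ projectedHull W) {u : Fin n → ℝ} :
    u ∈ polyhedron (dualCellMatrix W x) (dualCellBound W x) ↔ x ∈ cell (convexHull ℝ W) u := by
  rw [mem_cell_iff (W.finite_toSet.isCompact_convexHull ℝ)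
    (image_fst_convexHull W ▸ hx)]
  refine Iff.trans ?_ (forall_mem_convexHull_le_iff (liftFunctional u).toLinearMap _).symm
  simp only [polyhedron, Set.mem_ofPred_eq, Pi.le_def, Subtype.forall]
  refine forall₂_congr fun w _ ↦ ?_
  change (w.1 - x) ⬝ᵥ u ≤ roof _ x - w.2 ↔ u ⬝ᵥ w.1 + w.2 ≤ u ⬝ᵥ x + roof _ x
  rw [dotProduct_comm, dotProduct_sub]
  constructor <;> intro h <;> linarith

lemma mem_polyhedron_dualCellMatrix_zero_iff {u : Fin n → ℝ} :
    u ∈ polyhedron (dualCellMatrix W x) 0 ↔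
      ∀ y ∈ projectedHull W, u ⬝ᵥ y ≤ u ⬝ᵥ x := by
  refine Iff.trans ?_ (forall_mem_convexHull_le_iff (dotProductEquiv ℝ (Fin n) u) _).symm
  rw [Set.forall_mem_image]
  simp only [polyhedron, Set.mem_ofPred_eq, Pi.le_def, Subtype.forall]
  refine forall₂_congr fun w _ ↦ ?_
  change (w.1 - x) ⬝ᵥ u ≤ 0 ↔ u ⬝ᵥ w.1 ≤ u ⬝ᵥ x
  rw [dotProduct_comm, dotProduct_sub, sub_nonpos]

lemma polyhedron_dualCell_nonempty (hx : x ∈ projectedHull W) :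
    (polyhedron (dualCellMatrix W x) (dualCellBound W x)).Nonempty := by
  by_contra hempty
  obtain ⟨c, hc, hcA, hcb⟩ := exists_farkas_certificate (Set.not_nonempty_iff_eq_empty.1 hempty)
  set h := roof (convexHull ℝ W) x
  set C := ∑ w, c w with hC
  have hCpos : 0 < C := by
    refine (Finset.sum_nonneg fun w _ ↦ hc w).lt_of_ne' fun hC0 ↦ hcb.ne ?_
    rw [(Fintype.sum_eq_zero_iff_of_nonneg hc).1 hC0, zero_dotProduct]
  have hfst : ∑ w, c w • w.1.1 = C • x := by
    rw [← sub_eq_zero, Finset.sum_smul, ← Finset.sum_sub_distrib, ← hcA, vecMul_eq_sum]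
    exact Finset.sum_congr rfl fun w _ ↦ (smul_sub (c w) w.1.1 x).symm
  have hsnd : C * h < ∑ w, c w * w.1.2 := by
    rw [← sub_neg, Finset.sum_mul, ← Finset.sum_sub_distrib]
    exact (Finset.sum_congr rfl fun w _ ↦ (mul_sub (c w) h w.1.2).symm).trans_lt hcb
  have hmem : (x, C⁻¹ * ∑ w, c w * w.1.2) ∈ convexHull ℝ (W : Set ((Fin n → ℝ) × ℝ)) := by
    convert Finset.univ.centerMass_mem_convexHull (fun w _ ↦ hc w) hCpos fun w _ ↦ w.2 using 1
    refine Prod.ext ?_ ?_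
    · simp only [Finset.centerMass, ← hC, Prod.smul_fst, Prod.fst_sum, hfst,
        inv_smul_smul₀ hCpos.ne']
    · simp only [Finset.centerMass, ← hC, Prod.smul_snd, Prod.snd_sum, smul_eq_mul]
  have hle : C⁻¹ * ∑ w, c w * w.1.2 ≤ h := (isGreatest_roof
    (W.finite_toSet.isCompact_convexHull ℝ) (image_fst_convexHull W ▸ hx)).2 hmem
  exact ((inv_mul_le_iff₀ hCpos).1 hle).not_gt hsnd

lemma eulerChar_dualCell (hx : x ∈ projectedHull W) :
    eulerChar n (dualCellMatrix W x) (dualCellBound W x) =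
      (-1) ^ (n + adim (projectedHull W)) *
        iverson (x ∈ intrinsicInterior ℝ (projectedHull W)) := by
  by_cases hint : x ∈ intrinsicInterior ℝ (projectedHull W)
  · have hL : (orthogonalDirections (projectedHull W) : Set (Fin n → ℝ)) =
        polyhedron (dualCellMatrix W x) 0 := by
      ext u
      rw [SetLike.mem_coe, mem_orthogonalDirections_iff hint,
        mem_polyhedron_dualCellMatrix_zero_iff]
    have hexp : n + adim (projectedHull W) =
        Module.finrank ℝ (orthogonalDirections (projectedHull W)) + 2 * adim (projectedHull W) := by
      have := adim_add_finrank_orthogonalDirections (projectedHull W)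
      omega
    rw [eulerChar_eq_neg_one_pow_finrank hL (polyhedron_dualCell_nonempty hx), iverson_true hint,
      mul_one, hexp, pow_add, (even_two_mul _).neg_one_pow, mul_one]
  · obtain ⟨f, hle, y, hy, hlt⟩ :=
      exists_support_of_notMem_intrinsicInterior (convex_convexHull ℝ _) hx hint
    obtain ⟨u, rfl⟩ := (dotProductEquiv ℝ (Fin n)).surjective f
    rw [iverson_false hint, mul_zero]
    refine eulerChar_eq_zero _ (mem_polyhedron_dualCellMatrix_zero_iff.2 hle) fun hneg ↦ ?_
    have := mem_polyhedron_dualCellMatrix_zero_iff.1 hneg y hy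
    rw [neg_dotProduct, neg_dotProduct, neg_le_neg_iff] at this
    exact hlt.not_ge this

end LiftedPolytope

section GenericTranslates

variable {K E ι : Type*} [Field K] [AddCommGroup E] [Module K E] [Module.Finite K E] [Fintype ι]

lemma comap_map_range_pi_id_ne_top {f : ι → Module.Dual K E} (hf : ∀ i, f i ≠ 0)
    (hι : Module.finrank K E < Fintype.card ι) :
    ((LinearMap.range (LinearMap.pi fun _ : ι ↦ LinearMap.id (R := K) (M := E))).map
      (LinearMap.piMap f)).comap (LinearMap.piMap f) ≠ ⊤ := by
  have hsurj : Function.Surjective (LinearMap.piMap f) :=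
    Function.Surjective.piMap fun i ↦ LinearMap.surjective (hf i)
  intro htop
  have hrange := (Submodule.finrank_mono (LinearMap.range_le_iff_comap.2 htop)).trans
    ((Submodule.finrank_map_le _ _).trans (LinearMap.finrank_range_le _))
  rw [LinearMap.range_eq_top.2 hsurj, finrank_top, Module.finrank_fintype_fun_eq_card] at hrange
  exact hι.not_ge hrange

lemma exists_forall_exists_forall_apply_add_ne_zero [Infinite K]
    (F : ι → Finset (Module.Dual K E)) (hF : ∀ i, 0 ∉ F i)
    (hι : Module.finrank K E < Fintype.card ι) :
    ∃ a : ι → E, ∀ u, ∃ i, ∀ f ∈ F i, f (u + a i) ≠ 0 := by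
  classical
  let bad (f : ι → Module.Dual K E) : Subspace K (ι → E) :=
    ((LinearMap.range (LinearMap.pi fun _ : ι ↦ LinearMap.id (R := K) (M := E))).map
      (LinearMap.piMap f)).comap (LinearMap.piMap f)
  have hbad : ⊤ ∉ (Fintype.piFinset F).image bad := by
    rw [Finset.mem_image]
    rintro ⟨f, hf, htop⟩
    exact comap_map_range_pi_id_ne_top
      (fun i hi ↦ hF i (hi ▸ Fintype.mem_piFinset.1 hf i)) hι htop
  obtain ⟨a, ha⟩ := (Set.ne_univ_iff_exists_notMem _).1
    (Subspace.biUnion_ne_univ_of_top_notMem hbad)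
  refine ⟨a, fun u ↦ ?_⟩
  by_contra! hzero
  choose f hf hfa using hzero
  refine ha (Set.mem_biUnion (Finset.mem_image_of_mem bad (Fintype.mem_piFinset.2 hf)) ?_)
  refine ⟨fun _ ↦ -u, ⟨-u, rfl⟩, funext fun i ↦ ?_⟩
  change f i (-u) = f i (a i)
  rw [map_neg, neg_eq_iff_add_eq_zero, ← map_add, hfa i]

lemma exists_forall_exists_injOn_dotProduct_add {n : ℕ} (V : ι → Finset (Fin n → ℝ))
    (hι : n < Fintype.card ι) :
    ∃ a : ι → Fin n → ℝ, ∀ u, ∃ i, Set.InjOn (fun v ↦ (u + a i) ⬝ᵥ v) (V i) := by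
  classical
  let F (i : ι) : Finset (Module.Dual ℝ (Fin n → ℝ)) :=
    (V i).offDiag.image fun p ↦ dotProductEquiv ℝ (Fin n) (p.1 - p.2)
  have hF (i : ι) : 0 ∉ F i := by
    simp only [F, Finset.mem_image, Finset.mem_offDiag, not_exists, not_and]
    rintro ⟨v, w⟩ ⟨-, -, hne⟩ h0
    exact hne (sub_eq_zero.1 ((dotProductEquiv ℝ (Fin n)).map_eq_zero_iff.1 h0))
  obtain ⟨a, ha⟩ := exists_forall_exists_forall_apply_add_ne_zero F hF
    (by simpa only [Module.finrank_fin_fun] using hι)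
  refine ⟨a, fun u ↦ (ha u).imp fun i hi v hv w hw hvw ↦ ?_⟩
  by_contra hne
  have hmem : (v, w) ∈ (V i).offDiag := Finset.mem_offDiag.2 ⟨hv, hw, hne⟩
  refine hi _ (Finset.mem_image_of_mem _ hmem) ?_
  change (v - w) ⬝ᵥ (u + a i) = 0
  rw [dotProduct_comm, dotProduct_sub]
  exact sub_eq_zero.2 hvw

end GenericTranslates

section LatticePoints

variable {n : ℕ}

lemma finite_isLatticePt_of_isBounded {A : Set (Fin n → ℝ)} (hA : Bornology.IsBounded A) :
    {x ∈ A | IsLatticePt x}.Finite := by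
  obtain ⟨R, hR⟩ := hA.exists_norm_le
  have hball : (Metric.closedBall (0 : Fin n → ℤ) R).Finite :=
    (isCompact_closedBall _ _).finite_of_discrete
  refine (hball.image fun z i ↦ (z i : ℝ)).subset ?_
  rintro x ⟨hxA, hx⟩
  choose z hz using hx
  obtain rfl : x = fun i ↦ (z i : ℝ) := funext hz
  exact ⟨z, mem_closedBall_zero_iff.2 (hR _ hxA), rfl⟩

lemma IsLatticePt.add_iff {v x : Fin n → ℝ} (hv : IsLatticePt v) :
    IsLatticePt (v + x) ↔ IsLatticePt x := by
  refine forall_congr' fun i ↦ ?_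
  obtain ⟨m, hm⟩ := hv i
  rw [Pi.add_apply, hm]
  constructor
  · rintro ⟨k, hk⟩
    exact ⟨k - m, by rw [Int.cast_sub, ← hk, add_sub_cancel_left]⟩
  · rintro ⟨k, hk⟩
    exact ⟨m + k, by rw [Int.cast_add, hk]⟩

lemma ncard_isLatticePt_singleton_add {v : Fin n → ℝ} (hv : IsLatticePt v) (A : Set (Fin n → ℝ)) :
    {x ∈ {v} + A | IsLatticePt x}.ncard = {x ∈ A | IsLatticePt x}.ncard := by
  have htranslate : {x ∈ {v} + A | IsLatticePt x} = (v + ·) '' {x ∈ A | IsLatticePt x} := by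
    rw [Set.singleton_add]
    ext y
    constructor
    · rintro ⟨⟨x, hx, rfl⟩, hlat⟩
      exact ⟨x, ⟨hx, hv.add_iff.1 hlat⟩, rfl⟩
    · rintro ⟨x, ⟨hx, hlat⟩, rfl⟩
      exact ⟨⟨x, hx, rfl⟩, hv.add_iff.2 hlat⟩
  rw [htranslate, Set.ncard_image_of_injective _ (add_right_injective v)]

lemma relintLat_zero : relintLat (0 : Set (Fin n → ℝ)) = 0 := by
  have h0 : IsLatticePt (0 : Fin n → ℝ) := fun _ ↦ ⟨0, Int.cast_zero.symm⟩
  rw [relintLat, ← Set.singleton_zero, intrinsicInterior_singleton]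
  ext x
  exact ⟨fun hx ↦ hx.1, fun hx ↦ ⟨hx, hx ▸ h0⟩⟩

lemma adim_zero : adim (0 : Set (Fin n → ℝ)) = 0 := by
  rw [adim, ← Set.singleton_zero, direction_affineSpan, vectorSpan_singleton, finrank_bot]

end LatticePoints

lemma sum_neg_one_pow_card_mul_eq_zero {ι : Type*} [Fintype ι] [DecidableEq ι]
    {R : Type*} [CommRing R] {f : Finset ι → R} (i : ι)
    (hf : ∀ J, i ∉ J → f (insert i J) = f J) : ∑ I, (-1) ^ #I * f I = 0 := by
  rw [← Finset.powerset_univ, ← Finset.insert_erase (Finset.mem_univ i),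
    Finset.sum_powerset_insert (Finset.notMem_erase _ _), ← Finset.sum_add_distrib]
  refine Finset.sum_eq_zero fun J hJ ↦ ?_
  have hi : i ∉ J := fun h ↦ Finset.notMem_erase i _ (Finset.mem_powerset.1 hJ h)
  rw [hf J hi, Finset.card_insert_of_notMem hi]
  ring

section LatticePointIdentity

open Matrix

variable {n : ℕ}

/-- The lattice points of the polytope `projectedHull W`. -/
noncomputable def latticePoints (W : Finset ((Fin n → ℝ) × ℝ)) : Finset (Fin n → ℝ) :=
  (finite_isLatticePt_of_isBounded (A := projectedHull W)
    (((W.finite_toSet.image Prod.fst).isCompact_convexHull ℝ).isBounded)).toFinset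

lemma mem_latticePoints {W : Finset ((Fin n → ℝ) × ℝ)} {x : Fin n → ℝ} :
    x ∈ latticePoints W ↔ x ∈ projectedHull W ∧ IsLatticePt x :=
  Set.Finite.mem_toFinset _

lemma sum_eulerChar_dualCell (W : Finset ((Fin n → ℝ) × ℝ)) :
    ∑ x ∈ latticePoints W, eulerChar n (dualCellMatrix W x) (dualCellBound W x) =
      (-1) ^ (n + adim (projectedHull W)) * (relintLat (projectedHull W)).ncard := by
  have hsub : relintLat (projectedHull W) ⊆ latticePoints W := fun x hx ↦
    mem_latticePoints.2 ⟨intrinsicInterior_subset hx.1, hx.2⟩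
  rw [← sum_iverson_mem hsub, Finset.mul_sum]
  refine Finset.sum_congr rfl fun x hx ↦ ?_
  obtain ⟨hmem, hlat⟩ := mem_latticePoints.1 hx
  rw [eulerChar_dualCell hmem, relintLat, Set.mem_sep_iff, and_iff_left hlat]

lemma sum_iverson_mem_polyhedron_dualCell (W : Finset ((Fin n → ℝ) × ℝ)) (u : Fin n → ℝ) :
    ∑ x ∈ latticePoints W, iverson (u ∈ polyhedron (dualCellMatrix W x) (dualCellBound W x)) =
      {x ∈ cell (convexHull ℝ W) u | IsLatticePt x}.ncard := by
  have hsub : {x ∈ cell (convexHull ℝ W) u | IsLatticePt x} ⊆ latticePoints W := fun x hx ↦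
    mem_latticePoints.2 ⟨image_fst_convexHull W ▸ cell_subset _ u hx.1, hx.2⟩
  rw [← sum_iverson_mem hsub]
  refine Finset.sum_congr rfl fun x hx ↦ ?_
  obtain ⟨hmem, hlat⟩ := mem_latticePoints.1 hx
  rw [mem_polyhedron_dualCell_iff hmem, Set.mem_sep_iff, and_iff_left hlat]

section MinkowskiSum

variable {ι : Type*} (W : ι → Finset ((Fin n → ℝ) × ℝ))

lemma projectedHull_sum (I : Finset ι) :
    projectedHull (∑ i ∈ I, W i) = ∑ i ∈ I, projectedHull (W i) := by
  simp only [projectedHull]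
  rw [Finset.coe_sum, ← convexHull_sum]
  exact congrArg _ (Set.image_finsetSum (AddMonoidHom.fst (Fin n → ℝ) ℝ) I _)

lemma cell_convexHull_sum (I : Finset ι) (u : Fin n → ℝ) :
    cell (convexHull ℝ ↑(∑ i ∈ I, W i)) u = ∑ i ∈ I, cell (convexHull ℝ (W i)) u := by
  rw [Finset.coe_sum, convexHull_sum, cell_sum]

lemma sum_neg_one_pow_mul_ncard_isLatticePt_cell [Fintype ι] {u v : Fin n → ℝ} {i : ι}
    (hcell : cell (convexHull ℝ (W i)) u = {v}) (hv : IsLatticePt v) :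
    ∑ I : Finset ι, (-1 : ℤ) ^ #I *
      {x ∈ cell (convexHull ℝ ↑(∑ i ∈ I, W i)) u | IsLatticePt x}.ncard = 0 := by
  classical
  refine sum_neg_one_pow_card_mul_eq_zero i fun J hJ ↦ ?_
  rw [cell_convexHull_sum, cell_convexHull_sum, Finset.sum_insert hJ, hcell,
    ncard_isLatticePt_singleton_add hv]

lemma sum_neg_one_pow_mul_ncard_relintLat_projectedHull [Fintype ι]
    (hW : ∀ u : Fin n → ℝ, ∃ i v, IsLatticePt v ∧ cell (convexHull ℝ (W i)) u = {v}) :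
    ∑ I : Finset ι, (-1 : ℤ) ^ (#I + adim (∑ i ∈ I, projectedHull (W i))) *
      (relintLat (∑ i ∈ I, projectedHull (W i))).ncard = 0 := by
  have heuler := sum_mul_eulerChar_eq_zero
    (s := Finset.univ.sigma fun I : Finset ι ↦ latticePoints (∑ i ∈ I, W i))
    (c := fun q ↦ (-1) ^ #q.1)
    (A := fun q ↦ dualCellMatrix (∑ i ∈ q.1, W i) q.2)
    (b := fun q ↦ dualCellBound (∑ i ∈ q.1, W i) q.2) fun u ↦ by
      obtain ⟨i, v, hv, hcell⟩ := hW u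
      simp only [Finset.sum_sigma, ← Finset.mul_sum, sum_iverson_mem_polyhedron_dualCell]
      exact sum_neg_one_pow_mul_ncard_isLatticePt_cell W hcell hv
  simp only [Finset.sum_sigma, ← Finset.mul_sum, sum_eulerChar_dualCell, projectedHull_sum]
    at heuler
  refine (mul_eq_zero.1 (?_ : (-1 : ℤ) ^ n * _ = 0)).resolve_left (pow_ne_zero n (by decide))
  rw [← heuler, Finset.mul_sum]
  exact Finset.sum_congr rfl fun I _ ↦ by ring

end MinkowskiSum

/-- The points of `V` lifted to `ℝⁿ × ℝ` by the height function `v ↦ a ⬝ᵥ v`. -/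
noncomputable def liftPoints (V : Finset (Fin n → ℝ)) (a : Fin n → ℝ) :
    Finset ((Fin n → ℝ) × ℝ) :=
  V.map ⟨fun v ↦ (v, a ⬝ᵥ v), fun _ _ h ↦ congrArg Prod.fst h⟩

lemma projectedHull_liftPoints (V : Finset (Fin n → ℝ)) (a : Fin n → ℝ) :
    projectedHull (liftPoints V a) = convexHull ℝ (V : Set (Fin n → ℝ)) := by
  rw [projectedHull, liftPoints, Finset.coe_map, Set.image_image]
  exact congrArg _ (Set.image_id _)

lemma exists_cell_liftPoints_eq_singleton {V : Finset (Fin n → ℝ)} (hV : V.Nonempty)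
    {a u : Fin n → ℝ} (hinj : Set.InjOn (fun v ↦ (u + a) ⬝ᵥ v) V) :
    ∃ v ∈ V, cell (convexHull ℝ (liftPoints V a)) u = {v} := by
  have hval (v : Fin n → ℝ) : liftFunctional u (v, a ⬝ᵥ v) = (u + a) ⬝ᵥ v := by
    rw [liftFunctional_apply, add_dotProduct]
  have hlift : Set.InjOn (liftFunctional u) (liftPoints V a) := by
    rw [liftPoints, Finset.coe_map]
    rintro - ⟨v, hv, rfl⟩ - ⟨w, hw, rfl⟩ h
    exact congrArg _ (hinj hv hw ((hval v).symm.trans (h.trans (hval w))))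
  obtain ⟨q, hq, hface⟩ := exists_toExposed_convexHull_eq_singleton hV.map hlift
  obtain ⟨v, hv, rfl⟩ := Finset.mem_map.1 hq
  exact ⟨v, hv, by rw [cell, liftPoints, hface, Set.image_singleton]; rfl⟩

theorem sum_neg_one_pow_mul_ncard_relintLat {ι : Type*} [Fintype ι] {P : ι → Set (Fin n → ℝ)}
    (hP : ∀ i, IsLatticePolytope (P i)) (hι : n < Fintype.card ι) :
    ∑ I : Finset ι, (-1 : ℤ) ^ (#I + adim (∑ i ∈ I, P i)) * (relintLat (∑ i ∈ I, P i)).ncard =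
      0 := by
  choose V hV hlat hPV using hP
  obtain ⟨a, ha⟩ := exists_forall_exists_injOn_dotProduct_add V hι
  obtain rfl : P = fun i ↦ projectedHull (liftPoints (V i) (a i)) :=
    funext fun i ↦ (hPV i).trans (projectedHull_liftPoints (V i) (a i)).symm
  refine sum_neg_one_pow_mul_ncard_relintLat_projectedHull _ fun u ↦ ?_
  obtain ⟨i, hi⟩ := ha u
  obtain ⟨v, hv, hcell⟩ := exists_cell_liftPoints_eq_singleton (hV i) hi
  exact ⟨i, v, hlat i v hv, hcell⟩

end LatticePointIdentity

/-- an irreducible proper family of n+1 lattice polytopes in ℝ^n has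
exactly one relative interior lattice point in its total Minkowski sum. -/
theorem unique_relint_lattice_point_of_irreducible {n : ℕ}
    (P : Fin (n + 1) → Set (Fin n → ℝ)) (hP : ∀ i, IsLatticePolytope (P i))
    (hdim : ∀ i, 1 ≤ adim (P i)) (hsum : adim (∑ i, P i) = n)
    (hhollow : ∀ I : Finset (Fin (n + 1)), I.Nonempty → I ≠ Finset.univ →
      relintLat (∑ i ∈ I, P i) = ∅)
    (hne : (relintLat (∑ i, P i)).Nonempty) :
    (relintLat (∑ i, P i)).ncard = 1 := by
  have hidentity := sum_neg_one_pow_mul_ncard_relintLat hP (by rw [Fintype.card_fin]; omega)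
  rw [Finset.sum_eq_add (∅ : Finset (Fin (n + 1))) Finset.univ
    Finset.univ_nonempty.ne_empty.symm ?proper (by simp) (by simp)] at hidentity
  case proper =>
    rintro I - ⟨hI, hI'⟩
    rw [hhollow I (Finset.nonempty_iff_ne_empty.2 hI) hI', Set.ncard_empty, Nat.cast_zero,
      mul_zero]
  set d := #(Finset.univ : Finset (Fin (n + 1))) + adim (∑ i, P i)
  have hsurvive : 1 + (-1 : ℤ) ^ d * (relintLat (∑ i, P i)).ncard = 0 := by
    rwa [Finset.sum_empty, Finset.card_empty, adim_zero, relintLat_zero, ← Set.singleton_zero,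
      Set.ncard_singleton] at hidentity
  rcases neg_one_pow_eq_or ℤ d with hsign | hsign <;> rw [hsign] at hsurvive <;> omega
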